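/- arXiv:1007.5226 — 3 statements merged into one kernel-verified Lean document; each statement's English description precedes it below -/
import Mathlib

section
/- Let 𝒦 ⊂ ℝ² and ℛ ⊂ ℝ² be bounded measurable sets and λ ∈ ℝ. Suppose G : ℝ² → ℂ is integrable, vanishes outside 𝒦, and satisfies the spectral-domain Fredholm equation ∫_𝒦 D(k,k') G(k') dk' = λ G(k) for almost every k ∈ 𝒦, where D(k,k') = (2π)^{-2} ∫_ℛ e^{i(k'−k)·x} dx. Then the bandlimited function g(x) = (2π)^{-2} ∫_𝒦 G(k) e^{i k·x} dk satisfies the spatial-domain Fredholm equation ∫_ℛ D(x,x') g(x') dx' = λ g(x) for every x ∈ ℝ², where D(x,x') = (2π)^{-2} ∫_𝒦 e^{i k·(x−x')} dk. -/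
open MeasureTheory Real Complex
open scoped RealInnerProductSpace

noncomputable section

/-!
Let `A` be the integral operator over `k ∈ 𝒦` with kernel `c · e^{i k·x}`, and `B` the one over
`x ∈ ℛ` with kernel `e^{-i k·x}`. By Fubini, `D(k,k')` is the kernel of `B ∘ A` and `D(x,x')` that
of `A ∘ B`, while `g = A G`. Hence `B (A G) = λ G` almost everywhere on `𝒦` gives
`(A ∘ B) g = A (B (A G)) = λ A G = λ g` at every point.
-/

section IntegralOperators

variable {X Y Z 𝕜 : Type*} [MeasurableSpace Y] [RCLike 𝕜]

/-- The integral operator with kernel `K`, taking functions on `Y` to functions on `X`. It acts on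
plain functions, with the value `0` at `x` when `y ↦ K x y * f y` is not integrable. -/
def integralOp (ν : Measure Y) (K : X → Y → 𝕜) (f : Y → 𝕜) (x : X) : 𝕜 :=
  ∫ y, K x y * f y ∂ν

/-- The composition of two kernels, which under integrability assumptions is the kernel of the
composition of their integral operators; see `integralOp_kernelComp_apply`. -/
def kernelComp (ν : Measure Y) (K : X → Y → 𝕜) (L : Y → Z → 𝕜) (x : X) (z : Z) : 𝕜 :=
  ∫ y, K x y * L y z ∂ν

theorem integralOp_congr_ae {ν : Measure Y} (K : X → Y → 𝕜) {f₁ f₂ : Y → 𝕜} (h : f₁ =ᵐ[ν] f₂) :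
    integralOp ν K f₁ = integralOp ν K f₂ :=
  funext fun x ↦ integral_congr_ae <| h.mono fun y hy ↦ congrArg (K x y * ·) hy

theorem integralOp_smul (ν : Measure Y) (K : X → Y → 𝕜) (a : 𝕜) (f : Y → 𝕜) :
    integralOp ν K (a • f) = a • integralOp ν K f := by
  ext x
  simp only [integralOp, Pi.smul_apply, mul_smul_comm, integral_smul]

theorem integrable_integralOp [MeasurableSpace X] {μ : Measure X} {ν : Measure Y}
    [IsFiniteMeasure μ] [SFinite ν] {K : X → Y → 𝕜} {C : ℝ} {f : Y → 𝕜}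
    (hK : AEStronglyMeasurable (Function.uncurry K) (μ.prod ν)) (hKC : ∀ x y, ‖K x y‖ ≤ C)
    (hf : Integrable f ν) : Integrable (integralOp ν K f) μ :=
  ((hf.comp_snd μ).bdd_mul hK (.of_forall fun p ↦ hKC p.1 p.2)).integral_prod_left

theorem integralOp_kernelComp_apply [MeasurableSpace Z] {ν : Measure Y} {ρ : Measure Z}
    [SFinite ν] [SFinite ρ] {K : X → Y → 𝕜} {L : Y → Z → 𝕜} {C : ℝ} {f : Z → 𝕜} {x : X}
    (hK : Integrable (K x) ν)
    (hL : AEStronglyMeasurable (Function.uncurry L) (ν.prod ρ)) (hLC : ∀ y z, ‖L y z‖ ≤ C)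
    (hf : Integrable f ρ) :
    integralOp ρ (kernelComp ν K L) f x = integralOp ν K (integralOp ρ L f) x := by
  have hint : Integrable (fun p : Y × Z ↦ L p.1 p.2 * (K x p.1 * f p.2)) (ν.prod ρ) :=
    (hK.mul_prod hf).bdd_mul hL (.of_forall fun p ↦ hLC p.1 p.2)
  calc ∫ z, (∫ y, K x y * L y z ∂ν) * f z ∂ρ
      = ∫ z, ∫ y, L y z * (K x y * f z) ∂ν ∂ρ := by
        simp only [← integral_mul_const, mul_left_comm, mul_assoc]
    _ = ∫ y, ∫ z, L y z * (K x y * f z) ∂ρ ∂ν := (integral_integral_swap hint).symm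
    _ = ∫ y, K x y * ∫ z, L y z * f z ∂ρ ∂ν := by
        simp only [← integral_const_mul, mul_left_comm]

theorem integralOp_kernelComp [MeasurableSpace X] [MeasurableSpace Z] {ν : Measure Y}
    {ρ : Measure Z} [IsFiniteMeasure ν] [SFinite ρ]
    {K : X → Y → 𝕜} {L : Y → Z → 𝕜} {C C' : ℝ} {f : Z → 𝕜}
    (hK : StronglyMeasurable (Function.uncurry K)) (hKC : ∀ x y, ‖K x y‖ ≤ C)
    (hL : StronglyMeasurable (Function.uncurry L)) (hLC : ∀ y z, ‖L y z‖ ≤ C')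
    (hf : Integrable f ρ) :
    integralOp ρ (kernelComp ν K L) f = integralOp ν K (integralOp ρ L f) :=
  funext fun x ↦ integralOp_kernelComp_apply
    (.of_bound (hK.comp_measurable measurable_prodMk_left).aestronglyMeasurable C
      (.of_forall (hKC x)))
    hL.aestronglyMeasurable hLC hf

theorem integralOp_kernelComp_eq_smul_of_swap [MeasurableSpace X] {μ : Measure X} {ν : Measure Y}
    [IsFiniteMeasure μ] [IsFiniteMeasure ν] {K : X → Y → 𝕜} {L : Y → X → 𝕜} {C C' : ℝ}
    {a : 𝕜} {f : Y → 𝕜}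
    (hK : StronglyMeasurable (Function.uncurry K)) (hKC : ∀ x y, ‖K x y‖ ≤ C)
    (hL : StronglyMeasurable (Function.uncurry L)) (hLC : ∀ y x, ‖L y x‖ ≤ C')
    (hf : Integrable f ν) (hfa : integralOp ν (kernelComp μ L K) f =ᵐ[ν] a • f) :
    integralOp μ (kernelComp ν K L) (integralOp ν K f) = a • integralOp ν K f :=
  calc integralOp μ (kernelComp ν K L) (integralOp ν K f)
      = integralOp ν K (integralOp μ L (integralOp ν K f)) :=
        integralOp_kernelComp hK hKC hL hLC
          (integrable_integralOp hK.aestronglyMeasurable hKC hf)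
    _ = integralOp ν K (integralOp ν (kernelComp μ L K) f) := by
        rw [integralOp_kernelComp hL hLC hK hKC hf]
    _ = integralOp ν K (a • f) := integralOp_congr_ae K hfa
    _ = a • integralOp ν K f := integralOp_smul ν K a f

end IntegralOperators

section FourierKernels

variable {E : Type*} [SeminormedAddCommGroup E] [InnerProductSpace ℝ E]

/-- The kernel `c · e^{i k·x}` of Fourier synthesis. It carries the whole normalisation constant
(`c = (2π)⁻²` in the plane), so that `analysisKernel` needs none. -/
def synthesisKernel (c : ℝ) (x k : E) : ℂ :=
  c • Complex.exp (Complex.I * (⟪k, x⟫ : ℝ))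

/-- The kernel `e^{-i k·x}` of Fourier analysis. -/
def analysisKernel (k x : E) : ℂ :=
  Complex.exp (Complex.I * (-⟪k, x⟫ : ℝ))

theorem norm_synthesisKernel (c : ℝ) (x k : E) : ‖synthesisKernel c x k‖ = |c| := by
  rw [synthesisKernel, norm_smul, norm_exp_I_mul_ofReal, mul_one, Real.norm_eq_abs]

theorem norm_analysisKernel (k x : E) : ‖analysisKernel k x‖ = 1 :=
  norm_exp_I_mul_ofReal _

theorem continuous_uncurry_synthesisKernel (c : ℝ) :
    Continuous (Function.uncurry (synthesisKernel (E := E) c)) := by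
  unfold synthesisKernel Function.uncurry
  fun_prop

theorem continuous_uncurry_analysisKernel :
    Continuous (Function.uncurry (analysisKernel (E := E))) := by
  unfold analysisKernel Function.uncurry
  fun_prop

theorem synthesisKernel_mul_analysisKernel (c : ℝ) (x k k' x' : E) :
    synthesisKernel c x k * analysisKernel k' x' =
      c • Complex.exp (Complex.I * (⟪k, x⟫ - ⟪k', x'⟫ : ℝ)) := by
  rw [synthesisKernel, analysisKernel, smul_mul_assoc, ← Complex.exp_add, ← mul_add,
    ← Complex.ofReal_add, ← sub_eq_add_neg]

variable [MeasurableSpace E]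

theorem kernelComp_analysisKernel_synthesisKernel (μ : Measure E) (c : ℝ) (k k' : E) :
    kernelComp μ analysisKernel (synthesisKernel c) k k' =
      c • ∫ x, Complex.exp (Complex.I * (⟪k' - k, x⟫ : ℝ)) ∂μ := by
  simp only [kernelComp, mul_comm (analysisKernel _ _), synthesisKernel_mul_analysisKernel,
    inner_sub_left, integral_smul]

theorem kernelComp_synthesisKernel_analysisKernel (ν : Measure E) (c : ℝ) (x x' : E) :
    kernelComp ν (synthesisKernel c) analysisKernel x x' =
      c • ∫ k, Complex.exp (Complex.I * (⟪k, x - x'⟫ : ℝ)) ∂ν := by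
  simp only [kernelComp, synthesisKernel_mul_analysisKernel, inner_sub_right, integral_smul]

theorem integralOp_synthesisKernel (ν : Measure E) (c : ℝ) (G : E → ℂ) (x : E) :
    integralOp ν (synthesisKernel c) G x =
      c • ∫ k, G k * Complex.exp (Complex.I * (⟪k, x⟫ : ℝ)) ∂ν := by
  simp only [integralOp, synthesisKernel, smul_mul_assoc, mul_comm (Complex.exp _), integral_smul]

end FourierKernels

theorem spectral_fredholm_implies_spatial_fredholm_general
    {E : Type*} [SeminormedAddCommGroup E] [InnerProductSpace ℝ E] [MeasurableSpace E]
    [OpensMeasurableSpace E] [SecondCountableTopology E]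
    {μ ν : Measure E} [IsFiniteMeasure μ] [IsFiniteMeasure ν] {c : ℝ} {lam : ℂ}
    {G : E → ℂ} (hG : Integrable G ν)
    {Dspec : E → E → ℂ}
    (hDspec : ∀ k k', Dspec k k' = c • ∫ x, Complex.exp (Complex.I * (⟪k' - k, x⟫ : ℝ)) ∂μ)
    (hFred : ∀ᵐ k ∂ν, ∫ k', Dspec k k' * G k' ∂ν = lam * G k)
    {g : E → ℂ}
    (hg : ∀ x, g x = c • ∫ k, G k * Complex.exp (Complex.I * (⟪k, x⟫ : ℝ)) ∂ν)
    {Dspat : E → E → ℂ}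
    (hDspat : ∀ x x', Dspat x x' = c • ∫ k, Complex.exp (Complex.I * (⟪k, x - x'⟫ : ℝ)) ∂ν)
    (x : E) : ∫ x', Dspat x x' * g x' ∂μ = lam * g x := by
  obtain rfl : Dspec = kernelComp μ analysisKernel (synthesisKernel c) := by
    ext k k'
    rw [hDspec, kernelComp_analysisKernel_synthesisKernel]
  obtain rfl : Dspat = kernelComp ν (synthesisKernel c) analysisKernel := by
    ext x x'
    rw [hDspat, kernelComp_synthesisKernel_analysisKernel]
  obtain rfl : g = integralOp ν (synthesisKernel c) G := by
    ext x
    rw [hg, integralOp_synthesisKernel]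
  exact congrFun (integralOp_kernelComp_eq_smul_of_swap
    (continuous_uncurry_synthesisKernel c).stronglyMeasurable
    (fun x k ↦ (norm_synthesisKernel c x k).le)
    continuous_uncurry_analysisKernel.stronglyMeasurable
    (fun k x ↦ (norm_analysisKernel k x).le) hG hFred) x

/-- If `G`, integrable and supported in the bounded measurable set `𝒦`, solves
the spectral-domain Fredholm equation `∫_𝒦 D(k,k') G(k') dk' = λ G(k)` for a.e. `k ∈ 𝒦`,
with `D(k,k') = (2π)⁻² ∫_ℛ e^{i(k'-k)·x} dx`, then the bandlimited function
`g(x) = (2π)⁻² ∫_𝒦 G(k) e^{i k·x} dk` solves the spatial-domain Fredholm equation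
`∫_ℛ D(x,x') g(x') dx' = λ g(x)` for every `x ∈ ℝ²`, where
`D(x,x') = (2π)⁻² ∫_𝒦 e^{i k·(x-x')} dk`. -/
theorem spectral_fredholm_implies_spatial_fredholm
    (𝒦 ℛ : Set (EuclideanSpace ℝ (Fin 2)))
    (h𝒦b : Bornology.IsBounded 𝒦) (h𝒦m : MeasurableSet 𝒦)
    (hℛb : Bornology.IsBounded ℛ) (hℛm : MeasurableSet ℛ)
    (lam : ℝ)
    (G : EuclideanSpace ℝ (Fin 2) → ℂ)
    (hGint : Integrable G)
    (hGsupp : ∀ k, k ∉ 𝒦 → G k = 0)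
    (Dspec : EuclideanSpace ℝ (Fin 2) → EuclideanSpace ℝ (Fin 2) → ℂ)
    (hDspec : ∀ k k', Dspec k k' = (((2 * π) ^ 2 : ℝ))⁻¹ •
      ∫ x in ℛ, Complex.exp (Complex.I * (⟪k' - k, x⟫ : ℝ)))
    (hFred : ∀ᵐ k ∂(volume.restrict 𝒦),
      ∫ k' in 𝒦, Dspec k k' * G k' = (lam : ℂ) * G k)
    (g : EuclideanSpace ℝ (Fin 2) → ℂ)
    (hg : ∀ x, g x = (((2 * π) ^ 2 : ℝ))⁻¹ •
      ∫ k in 𝒦, G k * Complex.exp (Complex.I * (⟪k, x⟫ : ℝ)))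
    (Dspat : EuclideanSpace ℝ (Fin 2) → EuclideanSpace ℝ (Fin 2) → ℂ)
    (hDspat : ∀ x x', Dspat x x' = (((2 * π) ^ 2 : ℝ))⁻¹ •
      ∫ k in 𝒦, Complex.exp (Complex.I * (⟪k, x - x'⟫ : ℝ))) :
    ∀ x, ∫ x' in ℛ, Dspat x x' * g x' = (lam : ℂ) * g x := by
  have : IsFiniteMeasure (volume.restrict 𝒦) := isFiniteMeasure_restrict.2 h𝒦b.measure_lt_top.ne
  have : IsFiniteMeasure (volume.restrict ℛ) := isFiniteMeasure_restrict.2 hℛb.measure_lt_top.ne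
  exact spectral_fredholm_implies_spatial_fredholm_general hGint.restrict hDspec hFred hg hDspat
end
end

section
/- Fixed-order reduction of the disk-on-disk concentration problem. Let m ∈ ℕ, K > 0, R > 0, λ ∈ ℝ, and let 𝗀 : [0,∞) → ℝ be continuous with r ↦ r·𝗀(r) integrable on [0,R], satisfying the fixed-order radial Fredholm equation ∫_0^R D_m(r,r') 𝗀(r') r' dr' = λ 𝗀(r) for every r ≥ 0, where D_m(r,r') = K² ∫_0^1 J_m(Kpr) J_m(Kpr') p dp. Then the function g : ℝ² → ℝ given in polar coordinates by g(r cos θ, r sin θ) = 𝗀(r) cos(mθ) satisfies the two-dimensional Fredholm equation ∫_{‖x'‖≤R} D(x,x') g(x') dx' = λ g(x) for every x ∈ ℝ², where D(x,x') = (2π)^{-2} ∫_{‖k‖≤K} e^{i k·(x−x')} dk. -/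
open MeasureTheory Real Complex
open scoped RealInnerProductSpace

noncomputable section

/-- Bessel function of the first kind of integer order `m`, via Bessel's integral
`J_m(z) = π⁻¹ ∫_0^π cos(mθ − z sin θ) dθ`. -/
def besselJ (m : ℤ) (z : ℝ) : ℝ :=
  π⁻¹ * ∫ θ in (0:ℝ)..π, Real.cos (m * θ - z * Real.sin θ)

/-- The point of `ℝ²` with polar coordinates `(r, θ)`. -/
def polarPt (r θ : ℝ) : EuclideanSpace ℝ (Fin 2) :=
  (EuclideanSpace.equiv (Fin 2) ℝ).symm ![r * Real.cos θ, r * Real.sin θ]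

/-!
The kernel `D` factors through plane waves, so integrating `g` against `D` over the disk of radius
`R` is, up to `(2π)⁻²`, a Fourier integral over that disk followed by one over the disk of radius
`K`, with opposite signs in the exponents. By the Jacobi–Anger formula
`∫ e^{iz cos(φ-θ)} cos(mθ) dθ = 2π i^m J_m(z) cos(mφ)`, a Fourier integral over a disk maps
`h(r) cos(mθ)` to `2π i^m (Hh)(κ) cos(mφ)`, where `H` is a truncated Hankel transform of order `m`.
The phases of the two steps cancel, and the composition of the two Hankel transforms has
kernel `D_m`.
-/

local notation "ℝ²" => EuclideanSpace ℝ (Fin 2)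

section Polar

lemma norm_polarPt {r : ℝ} (hr : 0 ≤ r) (θ : ℝ) : ‖polarPt r θ‖ = r := by
  have hsq : (r * Real.cos θ) ^ 2 + (r * Real.sin θ) ^ 2 = r ^ 2 := by
    linear_combination r ^ 2 * Real.cos_sq_add_sin_sq θ
  simp [polarPt, EuclideanSpace.norm_eq, hsq, Real.sqrt_sq hr]

lemma exists_eq_polarPt (x : ℝ²) : ∃ r ≥ 0, ∃ θ, x = polarPt r θ := by
  refine ⟨‖(⟨x 0, x 1⟩ : ℂ)‖, norm_nonneg _, Complex.arg ⟨x 0, x 1⟩, ?_⟩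
  ext i
  fin_cases i <;> simp [polarPt, Complex.norm_mul_cos_arg, Complex.norm_mul_sin_arg]

lemma inner_polarPt (r θ s φ : ℝ) :
    ⟪polarPt r θ, polarPt s φ⟫ = r * s * Real.cos (θ - φ) := by
  simp only [polarPt, PiLp.continuousLinearEquiv_symm_apply, PiLp.inner_apply, RCLike.inner_apply,
    ringHom_apply, Fin.sum_univ_two, Matrix.cons_val_zero, Matrix.cons_val_one,
    Matrix.cons_val_fin_one, Real.cos_sub]
  ring

lemma neg_polarPt (r θ : ℝ) : -polarPt r θ = polarPt r (θ + π) := by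
  ext i
  fin_cases i <;> simp [polarPt]

/-- The measurable identification of `ℝ × ℝ`, on which Mathlib defines polar coordinates, with the
Euclidean plane. -/
def prodEquivPlane : ℝ × ℝ ≃ᵐ ℝ² :=
  MeasurableEquiv.finTwoArrow.symm.trans (MeasurableEquiv.toLp 2 (Fin 2 → ℝ))

lemma measurePreserving_prodEquivPlane : MeasurePreserving prodEquivPlane :=
  (PiLp.volume_preserving_toLp (Fin 2)).comp (volume_preserving_finTwoArrow ℝ).symm

lemma prodEquivPlane_polarCoord_symm (p : ℝ × ℝ) :
    prodEquivPlane (polarCoord.symm p) = polarPt p.1 p.2 := rfl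

variable {F : Type*} [NormedAddCommGroup F] [NormedSpace ℝ F]

lemma integrable_iff_integrableOn_polarPt (f : ℝ² → F) :
    Integrable f ↔ IntegrableOn (fun p ↦ p.1 • f (polarPt p.1 p.2)) polarCoord.target := by
  calc Integrable f
      ↔ Integrable (f ∘ prodEquivPlane) :=
        (measurePreserving_prodEquivPlane.integrable_comp_emb
          prodEquivPlane.measurableEmbedding).symm
    _ ↔ IntegrableOn (f ∘ prodEquivPlane) polarCoord.source := by
        rw [← integrableOn_univ]
        exact integrableOn_congr_set_ae polarCoord_source_ae_eq_univ.symm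
    _ ↔ IntegrableOn (fun p ↦ |p.1| • f (polarPt p.1 p.2)) polarCoord.target := by
        rw [← polarCoord.symm_image_target_eq_source,
          integrableOn_image_iff_integrableOn_abs_det_fderiv_smul volume
            polarCoord.open_target.measurableSet
            (fun p _ ↦ (hasFDerivAt_polarCoord_symm p).hasFDerivWithinAt) polarCoord.symm.injOn]
        simp only [det_fderivPolarCoordSymm, Function.comp_apply, prodEquivPlane_polarCoord_symm]
    _ ↔ IntegrableOn (fun p ↦ p.1 • f (polarPt p.1 p.2)) polarCoord.target :=
        integrableOn_congr_fun (fun p hp ↦ congrArg (· • f (polarPt p.1 p.2)) (abs_of_pos hp.1))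
          polarCoord.open_target.measurableSet

lemma integral_eq_integral_polarPt (f : ℝ² → F) :
    ∫ x, f x = ∫ p in polarCoord.target, p.1 • f (polarPt p.1 p.2) := by
  rw [← measurePreserving_prodEquivPlane.integral_comp prodEquivPlane.measurableEmbedding,
    ← integral_comp_polarCoord_symm]
  rfl

lemma smul_indicator_closedBall_polarPt (R : ℝ) (f : ℝ² → F) {p : ℝ × ℝ}
    (hp : p ∈ polarCoord.target) :
    p.1 • (Metric.closedBall 0 R).indicator f (polarPt p.1 p.2) =
      (Set.Ioc 0 R ×ˢ Set.Ioo (-π) π).indicator (fun p ↦ p.1 • f (polarPt p.1 p.2)) p := by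
  obtain ⟨hr, hθ⟩ := hp
  rw [Set.mem_Ioi] at hr
  have hmem : polarPt p.1 p.2 ∈ Metric.closedBall 0 R ↔ p ∈ Set.Ioc 0 R ×ˢ Set.Ioo (-π) π := by
    simp only [mem_closedBall_zero_iff, norm_polarPt hr.le, Set.mem_prod, Set.mem_Ioc, hr, hθ,
      true_and, and_true]
  by_cases h : p ∈ Set.Ioc 0 R ×ˢ Set.Ioo (-π) π
  · rw [Set.indicator_of_mem h, Set.indicator_of_mem (hmem.2 h)]
  · rw [Set.indicator_of_notMem h, Set.indicator_of_notMem (mt hmem.1 h), smul_zero]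

lemma polarCoord_target_inter_Ioc_prod_Ioo (R : ℝ) :
    polarCoord.target ∩ Set.Ioc 0 R ×ˢ Set.Ioo (-π) π = Set.Ioc 0 R ×ˢ Set.Ioo (-π) π :=
  Set.inter_eq_right.2 (Set.prod_mono_left fun _ hr ↦ hr.1)

lemma integrableOn_closedBall_iff_polarPt (R : ℝ) (f : ℝ² → F) :
    IntegrableOn f (Metric.closedBall 0 R) ↔
      IntegrableOn (fun p ↦ p.1 • f (polarPt p.1 p.2)) (Set.Ioc 0 R ×ˢ Set.Ioo (-π) π) := by
  rw [← integrable_indicator_iff Metric.isClosed_closedBall.measurableSet,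
    integrable_iff_integrableOn_polarPt,
    integrableOn_congr_fun (fun _ ↦ smul_indicator_closedBall_polarPt R f)
      polarCoord.open_target.measurableSet, IntegrableOn,
    integrable_indicator_iff (measurableSet_Ioc.prod measurableSet_Ioo), IntegrableOn,
    Measure.restrict_restrict (measurableSet_Ioc.prod measurableSet_Ioo), Set.inter_comm,
    polarCoord_target_inter_Ioc_prod_Ioo, IntegrableOn]

lemma setIntegral_closedBall_eq_integral_polarPt {R : ℝ} (hR : 0 ≤ R) {f : ℝ² → F}
    (hf : IntegrableOn f (Metric.closedBall 0 R)) :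
    ∫ x in Metric.closedBall 0 R, f x =
      ∫ r in (0 : ℝ)..R, ∫ θ in (-π)..π, r • f (polarPt r θ) := by
  rw [integrableOn_closedBall_iff_polarPt, Measure.volume_eq_prod] at hf
  rw [← integral_indicator Metric.isClosed_closedBall.measurableSet,
    integral_eq_integral_polarPt,
    setIntegral_congr_fun polarCoord.open_target.measurableSet
      (fun _ ↦ smul_indicator_closedBall_polarPt R f),
    setIntegral_indicator (measurableSet_Ioc.prod measurableSet_Ioo),
    polarCoord_target_inter_Ioc_prod_Ioo, Measure.volume_eq_prod, setIntegral_prod _ hf]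
  simp only [intervalIntegral.integral_of_le hR,
    intervalIntegral.integral_of_le (neg_le_self pi_nonneg), integral_Ioc_eq_integral_Ioo]

end Polar

section Bessel

lemma continuous_besselJ (m : ℤ) : Continuous (besselJ m) := by
  refine continuous_const.mul
    (intervalIntegral.continuous_parametric_intervalIntegral_of_continuous' ?_ 0 π)
  simp only [Function.uncurry_def]
  fun_prop

lemma integral_exp_sin_sub_eq_besselJ (m : ℤ) (z : ℝ) :
    ∫ t in (-π)..π, cexp (I * (z * Real.sin t - m * t : ℝ)) = 2 * π * besselJ m z := by
  set f : ℝ → ℂ := fun t ↦ cexp (I * (z * Real.sin t - m * t : ℝ)) with hf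
  have hcont : Continuous f := by fun_prop
  have hneg : ∫ t in (-π)..0, f t = ∫ t in (0 : ℝ)..π, f (-t) := by
    rw [intervalIntegral.integral_comp_neg, neg_zero]
  have hsum (t : ℝ) : f (-t) + f t = (2 * Real.cos (m * t - z * Real.sin t) : ℝ) := by
    rw [← Real.cos_neg, Complex.ofReal_mul, Complex.ofReal_cos, Complex.ofReal_ofNat,
      Complex.two_cos, add_comm, hf]
    simp only [Real.sin_neg]
    congr 2 <;> push_cast <;> ring
  calc ∫ t in (-π)..π, f t
      = ∫ t in (0 : ℝ)..π, (f (-t) + f t) := by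
        rw [← intervalIntegral.integral_add_adjacent_intervals (b := 0)
            (hcont.intervalIntegrable _ _) (hcont.intervalIntegrable _ _), hneg,
          intervalIntegral.integral_add (Continuous.intervalIntegrable (by fun_prop) _ _)
            (hcont.intervalIntegrable _ _)]
    _ = 2 * π * besselJ m z := by
        simp_rw [hsum]
        rw [intervalIntegral.integral_ofReal, intervalIntegral.integral_const_mul, besselJ]
        push_cast
        field_simp

lemma exp_intCast_mul_pi_div_two_mul_I (m : ℤ) : cexp (m * (π / 2 * I)) = I ^ m := by
  rw [Complex.exp_int_mul, Complex.exp_pi_div_two_mul_I]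

lemma integral_exp_cos_sub_mul_exp (m : ℤ) (z φ : ℝ) :
    ∫ θ in (-π)..π, cexp (I * (z * Real.cos (φ - θ) : ℝ)) * cexp (m * θ * I) =
      2 * π * I ^ m * besselJ m z * cexp (m * φ * I) := by
  set f : ℝ → ℂ := fun t ↦ cexp (I * (z * Real.sin t - m * t : ℝ)) with hf
  have hper : Function.Periodic f (2 * π) := by
    intro t
    have hexp : I * (z * Real.sin (t + 2 * π) - m * (t + 2 * π) : ℝ) =
        I * (z * Real.sin t - m * t : ℝ) - m * (2 * π * I) := by
      rw [Real.sin_add_two_pi]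
      push_cast
      ring
    rw [hf]
    dsimp only
    rw [hexp, Complex.exp_periodic.sub_int_mul_eq]
  have hshift (θ : ℝ) : cexp (I * (z * Real.cos (φ - θ) : ℝ)) * cexp (m * θ * I) =
      I ^ m * cexp (m * φ * I) * f (φ + π / 2 - θ) := by
    rw [← exp_intCast_mul_pi_div_two_mul_I, ← Complex.exp_add, ← Complex.exp_add, hf]
    dsimp only
    rw [← Complex.exp_add, show φ + π / 2 - θ = φ - θ + π / 2 by ring, Real.sin_add_pi_div_two]
    push_cast
    ring_nf
  have hperiod : ∫ t in (φ + π / 2 - π)..(φ + π / 2 - -π), f t = ∫ t in (-π)..π, f t := by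
    convert hper.intervalIntegral_add_eq (φ + π / 2 - π) (-π) using 2 <;> ring
  simp_rw [hshift]
  rw [intervalIntegral.integral_const_mul, intervalIntegral.integral_comp_sub_left f, hperiod,
    integral_exp_sin_sub_eq_besselJ]
  ring

lemma ofReal_cos_intCast_mul (m : ℤ) (θ : ℝ) :
    (Real.cos (m * θ) : ℂ) = (cexp (m * θ * I) + cexp (m * (-θ : ℝ) * I)) / 2 := by
  rw [Complex.ofReal_cos, Complex.cos]
  push_cast
  ring_nf

lemma integral_exp_cos_sub_mul_cos (m : ℤ) (z φ : ℝ) :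
    ∫ θ in (-π)..π, cexp (I * (z * Real.cos (φ - θ) : ℝ)) * Real.cos (m * θ) =
      2 * π * I ^ m * besselJ m z * Real.cos (m * φ) := by
  set E : ℝ → ℝ → ℂ :=
    fun φ θ ↦ cexp (I * (z * Real.cos (φ - θ) : ℝ)) * cexp (m * θ * I) with hE
  have hcont (φ : ℝ) : Continuous (E φ) := by fun_prop
  have hcont_neg : Continuous fun θ ↦ E (-φ) (-θ) := (hcont (-φ)).comp continuous_neg
  have hcos (θ : ℝ) : cexp (I * (z * Real.cos (φ - θ) : ℝ)) * Real.cos (m * θ) =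
      (E φ θ + E (-φ) (-θ)) / 2 := by
    rw [hE, ofReal_cos_intCast_mul]
    dsimp only
    rw [show -φ - -θ = -(φ - θ) by ring, Real.cos_neg]
    ring
  have hneg : ∫ θ in (-π)..π, E (-φ) (-θ) = ∫ θ in (-π)..π, E (-φ) θ := by
    rw [intervalIntegral.integral_comp_neg, neg_neg]
  simp_rw [hcos]
  rw [intervalIntegral.integral_div, intervalIntegral.integral_add
      ((hcont φ).intervalIntegrable _ _) (hcont_neg.intervalIntegrable _ _), hneg,
    integral_exp_cos_sub_mul_exp, integral_exp_cos_sub_mul_exp, ofReal_cos_intCast_mul]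
  ring

end Bessel

section Hankel

/-- The Hankel transform of order `m` of a radial profile `h` cut off at radius `R`. -/
def truncatedHankel (m : ℤ) (R : ℝ) (h : ℝ → ℂ) (κ : ℝ) : ℂ :=
  ∫ r in (0 : ℝ)..R, besselJ m (κ * r) * (r * h r)

/-- The kernel `D_m(r,r')` of the radial Fredholm equation of order `m` at bandwidth `K`. -/
def radialKernel (m : ℤ) (K r r' : ℝ) : ℝ :=
  K ^ 2 * ∫ p in (0 : ℝ)..1, besselJ m (K * p * r) * besselJ m (K * p * r') * p

lemma radialKernel_eq_integral_zero_to_bandwidth (m : ℤ) (K r r' : ℝ) :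
    radialKernel m K r r' = ∫ κ in (0 : ℝ)..K, besselJ m (κ * r) * besselJ m (κ * r') * κ := by
  have hscale := intervalIntegral.smul_integral_comp_mul_left (a := 0) (b := 1)
    (fun κ ↦ besselJ m (κ * r) * besselJ m (κ * r') * κ) K
  rw [mul_zero, mul_one] at hscale
  rw [← hscale, radialKernel, smul_eq_mul, sq, mul_assoc, ← intervalIntegral.integral_const_mul]
  congr 2 with p
  ring

lemma truncatedHankel_const_mul (m : ℤ) (R : ℝ) (c : ℂ) (h : ℝ → ℂ) (κ : ℝ) :
    truncatedHankel m R (fun r ↦ c * h r) κ = c * truncatedHankel m R h κ := by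
  rw [truncatedHankel, truncatedHankel, ← intervalIntegral.integral_const_mul]
  congr 1 with r
  ring

lemma integrableOn_uIoc_prod_continuous_mul_snd {A : Type*} [NormedRing A] {G : ℝ × ℝ → A}
    (hG : Continuous G) {f : ℝ → A} {c d : ℝ} (hf : IntervalIntegrable f volume c d) (a b : ℝ) :
    IntegrableOn (fun p ↦ G p * f p.2) (Set.uIoc a b ×ˢ Set.uIoc c d) := by
  have hsnd : IntegrableOn (fun p : ℝ × ℝ ↦ f p.2) (Set.uIoc a b ×ˢ Set.uIoc c d) := by
    rw [IntegrableOn, Measure.volume_eq_prod, ← Measure.prod_restrict]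
    have : IsFiniteMeasure (volume.restrict (Set.uIoc a b)) := by
      rw [Set.uIoc]
      infer_instance
    exact hf.def'.comp_snd _
  exact hsnd.continuousOn_mul_of_subset hG.continuousOn (isCompact_uIcc.prod isCompact_uIcc)
    (measurableSet_uIoc.prod measurableSet_uIoc)
    (Set.prod_mono Set.uIoc_subset_uIcc Set.uIoc_subset_uIcc)

variable {R : ℝ} {h : ℝ → ℂ}

lemma intervalIntegrable_mul_truncatedHankel (m : ℤ)
    (hh : IntervalIntegrable (fun r ↦ r * h r) volume 0 R) (a b : ℝ) :
    IntervalIntegrable (fun κ ↦ κ * truncatedHankel m R h κ) volume a b := by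
  have hG : Continuous fun p : ℝ × ℝ ↦ (p.1 * besselJ m (p.1 * p.2) : ℂ) := by
    have := continuous_besselJ m
    fun_prop
  have hprod := integrableOn_uIoc_prod_continuous_mul_snd hG hh a b
  rw [IntegrableOn, Measure.volume_eq_prod, ← Measure.prod_restrict] at hprod
  have hset_integral : (fun κ : ℝ ↦ κ * truncatedHankel m R h κ) = fun κ : ℝ ↦
      (if 0 ≤ R then 1 else -1 : ℝ) •
        ∫ r in Set.uIoc 0 R, κ * besselJ m (κ * r) * (r * h r) := by
    ext κ
    simp only [truncatedHankel, intervalIntegral.intervalIntegral_eq_integral_uIoc,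
      mul_smul_comm, mul_assoc, integral_const_mul]
  rw [intervalIntegrable_iff, hset_integral]
  exact hprod.integral_prod_left.smul (_ : ℝ)

lemma truncatedHankel_truncatedHankel (m : ℤ) (K r : ℝ)
    (hh : IntervalIntegrable (fun r ↦ r * h r) volume 0 R) :
    truncatedHankel m K (truncatedHankel m R h) r =
      ∫ r' in (0 : ℝ)..R, radialKernel m K r r' * h r' * r' := by
  set G : ℝ × ℝ → ℂ :=
    fun p ↦ (besselJ m (r * p.1) * besselJ m (p.1 * p.2) * p.1 : ℝ) with hGdef
  have hG : Continuous G := by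
    have := continuous_besselJ m
    fun_prop
  calc truncatedHankel m K (truncatedHankel m R h) r
      = ∫ κ in (0 : ℝ)..K, ∫ r' in (0 : ℝ)..R, G (κ, r') * (r' * h r') := by
        simp only [truncatedHankel, ← intervalIntegral.integral_const_mul]
        congr! 4
        simp only [hGdef]
        push_cast
        ring
    _ = ∫ r' in (0 : ℝ)..R, ∫ κ in (0 : ℝ)..K, G (κ, r') * (r' * h r') :=
        intervalIntegral_intervalIntegral_swap
          (integrableOn_uIoc_prod_continuous_mul_snd hG hh 0 K)
    _ = ∫ r' in (0 : ℝ)..R, radialKernel m K r r' * h r' * r' := by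
        simp only [intervalIntegral.integral_mul_const, hGdef, intervalIntegral.integral_ofReal,
          radialKernel_eq_integral_zero_to_bandwidth, mul_comm r]
        congr! 2
        ring

end Hankel

section Fourier

lemma integral_integral_exp_inner_sub_mul {V : Type*} [NormedAddCommGroup V]
    [InnerProductSpace ℝ V] [MeasurableSpace V] [BorelSpace V] [SecondCountableTopology V]
    {μ ν : Measure V} [IsFiniteMeasure μ] [SFinite ν] {g : V → ℂ} (hg : Integrable g ν) (x : V) :
    ∫ x', (∫ k, cexp (I * (⟪k, x - x'⟫ : ℝ)) ∂μ) * g x' ∂ν =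
      ∫ k, cexp (I * (⟪x, k⟫ : ℝ)) * ∫ x', cexp (I * (⟪-k, x'⟫ : ℝ)) * g x' ∂ν ∂μ := by
  have hint : Integrable (fun p : V × V ↦ cexp (I * (⟪p.2, x - p.1⟫ : ℝ)) * g p.1) (ν.prod μ) :=
    (hg.comp_fst μ).bdd_mul (c := 1) (Continuous.aestronglyMeasurable (by fun_prop))
      (.of_forall fun p ↦ (Complex.norm_exp_I_mul_ofReal _).le)
  simp only [← integral_mul_const, ← integral_const_mul]
  rw [integral_integral_swap hint]
  congr! 4 with k
  rw [← mul_assoc, ← Complex.exp_add, inner_sub_right, inner_neg_left, real_inner_comm]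
  push_cast
  ring_nf

/-- The Fourier integral of `f` over the disk of radius `R`, with the sign and normalisation
`∫ e^{i k·x} f(x) dx`. -/
def diskFourier (R : ℝ) (f : ℝ² → ℂ) (k : ℝ²) : ℂ :=
  ∫ x in Metric.closedBall 0 R, cexp (I * (⟪k, x⟫ : ℝ)) * f x

/-- The kernel `D(x,x')` of the projection onto functions bandlimited to the disk of radius `K`. -/
def bandlimitedKernel (K : ℝ) (x x' : ℝ²) : ℂ :=
  (((2 * π) ^ 2 : ℝ))⁻¹ • ∫ k in Metric.closedBall (0 : ℝ²) K, cexp (I * (⟪k, x - x'⟫ : ℝ))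

lemma setIntegral_bandlimitedKernel_mul (K : ℝ) {R : ℝ} {g : ℝ² → ℂ}
    (hg : IntegrableOn g (Metric.closedBall 0 R)) (x : ℝ²) :
    ∫ x' in Metric.closedBall 0 R, bandlimitedKernel K x x' * g x' =
      (((2 * π) ^ 2 : ℝ))⁻¹ • diskFourier K (fun k ↦ diskFourier R g (-k)) x := by
  have : IsFiniteMeasure (volume.restrict (Metric.closedBall (0 : ℝ²) K)) :=
    isFiniteMeasure_restrict.2 measure_closedBall_lt_top.ne
  simp only [bandlimitedKernel, diskFourier, smul_mul_assoc, integral_smul,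
    integral_integral_exp_inner_sub_mul hg x]

end Fourier

section CosineProfile

/-- `f` is the `m`-th cosine mode with radial profile `h`: `f(r cos θ, r sin θ) = h(r) cos(mθ)` for
`r ≥ 0`. -/
def HasCosineProfile (m : ℤ) (f : ℝ² → ℂ) (h : ℝ → ℂ) : Prop :=
  ∀ r ≥ 0, ∀ θ, f (polarPt r θ) = h r * Real.cos (m * θ)

namespace HasCosineProfile

variable {m : ℤ} {f : ℝ² → ℂ} {h : ℝ → ℂ} {K R : ℝ}

lemma comp_neg (hf : HasCosineProfile m f h) :
    HasCosineProfile m (fun x ↦ f (-x)) (fun r ↦ (-1) ^ m * h r) := by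
  intro r hr θ
  dsimp only
  rw [neg_polarPt, hf r hr, mul_add, Real.cos_add_int_mul_pi]
  push_cast
  ring

lemma integrableOn_closedBall (hf : HasCosineProfile m f h) (hR : 0 ≤ R)
    (hh : IntervalIntegrable (fun r ↦ r * h r) volume 0 R) :
    IntegrableOn f (Metric.closedBall 0 R) := by
  have hcos : IntegrableOn (fun θ : ℝ ↦ (Real.cos (m * θ) : ℂ)) (Set.Ioo (-π) π) :=
    ((by fun_prop : Continuous fun θ : ℝ ↦ (Real.cos (m * θ) : ℂ)).integrableOn_Icc).mono_set
      Set.Ioo_subset_Icc_self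
  have hprod := ((intervalIntegrable_iff_integrableOn_Ioc_of_le hR).1 hh).mul_prod hcos
  rw [Measure.prod_restrict, ← Measure.volume_eq_prod] at hprod
  rw [integrableOn_closedBall_iff_polarPt]
  refine IntegrableOn.congr_fun hprod (fun p hp ↦ ?_) (measurableSet_Ioc.prod measurableSet_Ioo)
  simp only [hf p.1 hp.1.1.le, real_smul, mul_assoc]

protected lemma diskFourier (hf : HasCosineProfile m f h) (hR : 0 ≤ R)
    (hh : IntervalIntegrable (fun r ↦ r * h r) volume 0 R) :
    HasCosineProfile m (diskFourier R f)
      (fun κ ↦ 2 * π * I ^ m * truncatedHankel m R h κ) := by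
  intro κ _ φ
  dsimp only
  have hint : IntegrableOn (fun x ↦ cexp (I * (⟪polarPt κ φ, x⟫ : ℝ)) * f x)
      (Metric.closedBall 0 R) :=
    (hf.integrableOn_closedBall hR hh).bdd_mul (c := 1)
      (Continuous.aestronglyMeasurable (by fun_prop))
      (.of_forall fun x ↦ (Complex.norm_exp_I_mul_ofReal _).le)
  have hangular (r : ℝ) (hr : r ∈ Set.uIcc 0 R) :
      ∫ θ in (-π)..π, r • (cexp (I * (⟪polarPt κ φ, polarPt r θ⟫ : ℝ)) * f (polarPt r θ)) =
        2 * π * I ^ m * Real.cos (m * φ) * (besselJ m (κ * r) * (r * h r)) := by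
    rw [Set.uIcc_of_le hR] at hr
    calc _ = ∫ θ in (-π)..π, r * h r *
            (cexp (I * (κ * r * Real.cos (φ - θ) : ℝ)) * Real.cos (m * θ)) := by
          simp only [hf r hr.1, inner_polarPt, real_smul]
          congr! 2
          ring
      _ = _ := by
          rw [intervalIntegral.integral_const_mul, integral_exp_cos_sub_mul_cos]
          ring
  rw [diskFourier, setIntegral_closedBall_eq_integral_polarPt hR hint,
    intervalIntegral.integral_congr hangular, intervalIntegral.integral_const_mul,
    truncatedHankel]
  ring

protected lemma setIntegral_bandlimitedKernel_mul (hf : HasCosineProfile m f h) (hK : 0 ≤ K)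
    (hR : 0 ≤ R) (hh : IntervalIntegrable (fun r ↦ r * h r) volume 0 R) :
    HasCosineProfile m (fun x ↦ ∫ x' in Metric.closedBall 0 R, bandlimitedKernel K x x' * f x')
      (fun r ↦ ∫ r' in (0 : ℝ)..R, radialKernel m K r r' * h r' * r') := by
  intro r hr θ
  have hhankel : IntervalIntegrable
      (fun κ : ℝ ↦ κ * ((-1) ^ m * (2 * π * I ^ m * truncatedHankel m R h κ))) volume 0 K := by
    convert (intervalIntegrable_mul_truncatedHankel m hh 0 K).const_mul
      ((-1) ^ m * (2 * π * I ^ m)) using 2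
    ring
  have hphase : I ^ m * ((-1) ^ m * I ^ m) = 1 := by
    rw [← mul_zpow, ← mul_zpow, neg_one_mul, mul_neg, I_mul_I, neg_neg, one_zpow]
  dsimp only
  rw [setIntegral_bandlimitedKernel_mul K (hf.integrableOn_closedBall hR hh),
    (hf.diskFourier hR hh).comp_neg.diskFourier hK hhankel r hr θ,
    real_smul]
  dsimp only
  rw [truncatedHankel_const_mul, truncatedHankel_const_mul,
    truncatedHankel_truncatedHankel m K r hh]
  push_cast
  field_simp
  linear_combination
    (∫ r' in (0 : ℝ)..R, radialKernel m K r r' * h r' * r') * Complex.cos (m * θ) * hphase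

end HasCosineProfile

end CosineProfile

theorem fixed_order_radial_reduction_general {m : ℤ} {K R : ℝ} (hK : 0 ≤ K) (hR : 0 ≤ R)
    {lam : ℂ} {gr : ℝ → ℂ} (hgrint : IntervalIntegrable (fun r ↦ r * gr r) volume 0 R)
    (hradial : ∀ r ≥ (0 : ℝ),
      ∫ r' in (0 : ℝ)..R, radialKernel m K r r' * gr r' * r' = lam * gr r)
    {g : ℝ² → ℂ} (hg : HasCosineProfile m g gr) (x : ℝ²) :
    ∫ x' in Metric.closedBall 0 R, bandlimitedKernel K x x' * g x' = lam * g x := by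
  obtain ⟨r, hr, θ, rfl⟩ := exists_eq_polarPt x
  have hmode := hg.setIntegral_bandlimitedKernel_mul hK hR hgrint r hr θ
  dsimp only at hmode
  rw [hmode, hradial r hr, hg r hr, mul_assoc]

/-- Fixed-order reduction of the disk-on-disk concentration problem.  If the
radial profile `gr` solves `∫_0^R D_m(r,r') gr(r') r' dr' = λ gr(r)` for every `r ≥ 0`, with
`D_m(r,r') = K² ∫_0^1 J_m(Kpr) J_m(Kpr') p dp`, then `g(r cos θ, r sin θ) = gr(r) cos(mθ)`
solves the planar Fredholm equation `∫_{‖x'‖≤R} D(x,x') g(x') dx' = λ g(x)` for every `x`,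
where `D(x,x') = (2π)⁻² ∫_{‖k‖≤K} e^{i k·(x−x')} dk`. -/
theorem fixed_order_radial_reduction
    (m : ℕ) (K R lam : ℝ) (hK : 0 < K) (hR : 0 < R)
    (gr : ℝ → ℝ)
    (hgrcont : ContinuousOn gr (Set.Ici 0))
    (hgrint : IntegrableOn (fun r => r * gr r) (Set.Icc 0 R))
    (Dm : ℝ → ℝ → ℝ)
    (hDm : ∀ r r', Dm r r' = K ^ 2 *
      ∫ p in (0:ℝ)..1, besselJ m (K * p * r) * besselJ m (K * p * r') * p)
    (hradial : ∀ r ≥ (0:ℝ), ∫ r' in (0:ℝ)..R, Dm r r' * gr r' * r' = lam * gr r)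
    (g : EuclideanSpace ℝ (Fin 2) → ℝ)
    (hgpolar : ∀ r ≥ (0:ℝ), ∀ θ : ℝ, g (polarPt r θ) = gr r * Real.cos (m * θ))
    (D : EuclideanSpace ℝ (Fin 2) → EuclideanSpace ℝ (Fin 2) → ℂ)
    (hD : ∀ x x', D x x' = (((2 * π) ^ 2 : ℝ))⁻¹ •
      ∫ k in Metric.closedBall (0 : EuclideanSpace ℝ (Fin 2)) K,
        Complex.exp (Complex.I * (⟪k, x - x'⟫ : ℝ))) :
    ∀ x, ∫ x' in Metric.closedBall (0 : EuclideanSpace ℝ (Fin 2)) R,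
      D x x' * (g x' : ℂ) = (lam : ℂ) * (g x : ℂ) := by
  obtain rfl : Dm = radialKernel m K := funext₂ hDm
  obtain rfl : D = bandlimitedKernel K := funext₂ hD
  refine fixed_order_radial_reduction_general hK.le hR.le (gr := fun r ↦ gr r)
    (m := m) ?_ (fun r hr ↦ ?_) (fun r hr θ ↦ ?_)
  · rw [intervalIntegrable_iff_integrableOn_Icc_of_le hR.le]
    exact_mod_cast hgrint.ofReal
  · simp only [← Complex.ofReal_mul, intervalIntegral.integral_ofReal, hradial r hr]
  · simp only [hgpolar r hr, Complex.ofReal_mul, Int.cast_natCast]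
end
end

section
/- One-dimensional equivalence of the spectral and time-domain concentration equations. Let T, W > 0 and λ ∈ ℝ. Suppose G : [−W, W] → ℂ is integrable and satisfies ∫_{−W}^{W} D(ω,ω') G(ω') dω' = λ G(ω) for almost every ω with |ω| ≤ W, where D(ω,ω') = sin[T(ω−ω')]/(π(ω−ω')) (with diagonal value T/π). Then the bandlimited function g(t) = (2π)^{-1} ∫_{−W}^{W} G(ω) e^{iωt} dω satisfies ∫_{−T}^{T} D(t,t') g(t') dt' = λ g(t) for every t ∈ ℝ, where D(t,t') = sin[W(t−t')]/(π(t−t')) (with diagonal value W/π). -/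
/-!
Write `F_a h (t) = (2π)⁻¹ ∫_{-a}^{a} e^{ixt} h(x) dx` and
`K_{a,b} h (s) = ∫_{-b}^{b} D_a(s, s') h(s') ds'`, where `D_a` is the sinc kernel. Since
`D_a(s, s') = (F_a 1)(s - s')`, Fubini factors `K_{a,b}` as `2π F_a R F_b`, where `R` is the
reflection `h(x) ↦ h(-x)`. As `R` commutes with `F_T`,
`K_{W,T} F_W = 2π F_W R F_T F_W = F_W (2π F_T R F_W) = F_W K_{T,W}`,
so `F_W` carries solutions of the spectral equation to solutions of the time-domain equation.
-/

open MeasureTheory Real Complex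

noncomputable section

/-- The sinc concentration kernel `sin(a(s−s'))/(π(s−s'))`, extended continuously by the
value `a/π` on the diagonal. -/
def sincKernel (a s s' : ℝ) : ℝ :=
  if s = s' then a / π else Real.sin (a * (s - s')) / (π * (s - s'))

section BandFourierInv

variable {E : Type*} [NormedAddCommGroup E] [NormedSpace ℂ E]

/-- The inverse Fourier transform of `h` restricted to the band `[-a, a]`, in the convention
`(2π)⁻¹ ∫ e^{ixt} h(x) dx`. The integral is oriented, so negative `a` changes its sign. -/
def bandFourierInv (a : ℝ) (h : ℝ → E) (t : ℝ) : E :=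
  (2 * π : ℝ)⁻¹ • ∫ x in (-a)..a, Complex.exp (Complex.I * x * t) • h x

theorem two_pi_smul_bandFourierInv (a : ℝ) (h : ℝ → E) (t : ℝ) :
    (2 * π : ℂ) • bandFourierInv a h t =
      ∫ x in (-a)..a, Complex.exp (Complex.I * x * t) • h x := by
  rw [bandFourierInv, ← coe_smul (2 * π)⁻¹, smul_smul]
  push_cast
  rw [mul_inv_cancel₀ (by simp [Real.pi_ne_zero]), one_smul]

theorem norm_exp_I_mul_mul (x t : ℝ) : ‖Complex.exp (Complex.I * x * t)‖ = 1 := by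
  rw [mul_assoc, ← Complex.ofReal_mul, Complex.norm_exp_I_mul_ofReal]

theorem bandFourierInv_congr_ae {a : ℝ} {f h : ℝ → E}
    (hfh : f =ᵐ[volume.restrict (Set.uIoc (-a) a)] h) :
    bandFourierInv a f = bandFourierInv a h := by
  ext t
  refine congrArg _ (intervalIntegral.integral_congr_ae_restrict ?_)
  filter_upwards [hfh] with x hx
  rw [hx]

theorem bandFourierInv_const_smul (a : ℝ) (c : ℂ) (h : ℝ → E) (t : ℝ) :
    bandFourierInv a (fun x => c • h x) t = c • bandFourierInv a h t := by
  simp only [bandFourierInv, smul_comm _ c, intervalIntegral.integral_smul]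

theorem bandFourierInv_comp_neg (a : ℝ) (h : ℝ → E) (t : ℝ) :
    bandFourierInv a (fun x => h (-x)) t = bandFourierInv a h (-t) := by
  have hreflect := intervalIntegral.integral_comp_neg (a := -a) (b := a)
    (fun x : ℝ => Complex.exp (Complex.I * x * (-t : ℝ)) • h x)
  simp only [ofReal_neg, mul_neg, neg_mul, neg_neg] at hreflect
  simp only [bandFourierInv, ofReal_neg, mul_neg, hreflect]

theorem continuous_bandFourierInv {a : ℝ} {h : ℝ → E}
    (hh : IntegrableOn h (Set.uIoc (-a) a)) : Continuous (bandFourierInv a h) := by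
  refine Continuous.const_smul (intervalIntegral.continuous_of_dominated_interval
    (bound := fun x => ‖h x‖) (fun t => ?_) (fun t => .of_forall fun x _ => ?_)
    (intervalIntegrable_iff.2 hh.norm) (.of_forall fun x _ => by fun_prop)) _
  · exact Continuous.aestronglyMeasurable (by fun_prop) |>.smul hh.aestronglyMeasurable
  · rw [norm_smul, norm_exp_I_mul_mul, one_mul]

end BandFourierInv

theorem bandFourierInv_eq_mul (a : ℝ) (h : ℝ → ℂ) (t : ℝ) :
    bandFourierInv a h t =
      (2 * π : ℝ)⁻¹ • ∫ x in (-a)..a, h x * Complex.exp (Complex.I * x * t) := by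
  simp only [bandFourierInv, smul_eq_mul, mul_comm]

theorem sincKernel_eq_bandFourierInv_one (a s s' : ℝ) :
    (sincKernel a s s' : ℂ) = bandFourierInv a (fun _ => (1 : ℂ)) (s - s') := by
  rcases eq_or_ne s s' with rfl | hne
  · simp only [sincKernel, if_pos, bandFourierInv, sub_self, ofReal_zero, mul_zero,
      Complex.exp_zero, smul_eq_mul, mul_one, intervalIntegral.integral_const, real_smul]
    push_cast
    field
  · have hd : s - s' ≠ 0 := sub_ne_zero.2 hne
    have hint : ∫ x in (-a)..a, Complex.exp (Complex.I * x * (s - s' : ℝ)) =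
        (s - s' : ℝ)⁻¹ • (2 * Real.sin (a * (s - s')) : ℂ) := by
      rw [← integral_exp_mul_I_eq_sin, ← neg_mul, ← intervalIntegral.integral_comp_mul_right _ hd]
      congr! 3
      push_cast
      ring
    simp only [sincKernel, if_neg hne, bandFourierInv, smul_eq_mul, mul_one, hint, real_smul]
    push_cast
    field

section SincOperator

variable {E : Type*} [NormedAddCommGroup E] [NormedSpace ℂ E]

theorem integrable_prod_exp_smul {μ ν : Measure ℝ} [IsFiniteMeasure ν] {h : ℝ → E}
    (hh : Integrable h μ) (s : ℝ) :
    Integrable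
      (Function.uncurry fun y x : ℝ => Complex.exp (Complex.I * x * (s - y : ℝ)) • h y)
      (μ.prod ν) :=
  (hh.comp_fst ν).bdd_smul 1 (Continuous.aestronglyMeasurable (by fun_prop))
    (.of_forall fun _ => (norm_exp_I_mul_mul _ _).le)

variable [CompleteSpace E]

theorem integral_sincKernel_smul (a : ℝ) {b : ℝ} {h : ℝ → E}
    (hh : IntegrableOn h (Set.uIoc (-b) b)) (s : ℝ) :
    ∫ y in (-b)..b, (sincKernel a s y : ℂ) • h y =
      (2 * π : ℂ) • bandFourierInv a (fun x => bandFourierInv b h (-x)) s := by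
  have hsplit (x y : ℝ) : Complex.exp (Complex.I * x * (s - y : ℝ)) =
      Complex.exp (Complex.I * x * s) * Complex.exp (Complex.I * y * (-x : ℝ)) := by
    rw [← Complex.exp_add]
    push_cast
    ring_nf
  have hprod : IntegrableOn
      (Function.uncurry fun y x : ℝ => Complex.exp (Complex.I * x * (s - y : ℝ)) • h y)
      (Set.uIoc (-b) b ×ˢ Set.uIoc (-a) a) := by
    have : IsFiniteMeasure (volume.restrict (Set.uIoc (-a) a)) :=
      inferInstanceAs (IsFiniteMeasure (volume.restrict (Set.Ioc _ _)))
    rw [IntegrableOn, Measure.volume_eq_prod, ← Measure.prod_restrict]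
    exact integrable_prod_exp_smul hh s
  calc
    ∫ y in (-b)..b, (sincKernel a s y : ℂ) • h y
    _ = ∫ y in (-b)..b, (2 * π : ℝ)⁻¹ •
          ∫ x in (-a)..a, Complex.exp (Complex.I * x * (s - y : ℝ)) • h y := by
      simp only [sincKernel_eq_bandFourierInv_one, bandFourierInv, smul_eq_mul, mul_one,
        intervalIntegral.integral_smul_const, smul_assoc]
    _ = (2 * π : ℝ)⁻¹ • ∫ x in (-a)..a, ∫ y in (-b)..b,
          Complex.exp (Complex.I * x * (s - y : ℝ)) • h y := by
      rw [intervalIntegral.integral_smul, intervalIntegral_intervalIntegral_swap hprod]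
    _ = (2 * π : ℝ)⁻¹ • ∫ x in (-a)..a, Complex.exp (Complex.I * x * s) •
          ∫ y in (-b)..b, Complex.exp (Complex.I * y * (-x : ℝ)) • h y := by
      simp only [hsplit, mul_smul, intervalIntegral.integral_smul]
    _ = (2 * π : ℂ) • bandFourierInv a (fun x => bandFourierInv b h (-x)) s := by
      rw [← bandFourierInv_const_smul]
      simp only [two_pi_smul_bandFourierInv]
      rfl

theorem integral_sincKernel_smul_bandFourierInv (T : ℝ) {W : ℝ} {G : ℝ → E}
    (hG : IntegrableOn G (Set.uIoc (-W) W)) (t : ℝ) :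
    ∫ t' in (-T)..T, (sincKernel W t t' : ℂ) • bandFourierInv W G t' =
      bandFourierInv W (fun ω => ∫ ω' in (-W)..W, (sincKernel T ω ω' : ℂ) • G ω') t := by
  have hg : IntegrableOn (bandFourierInv W G) (Set.uIoc (-T) T) :=
    ((continuous_bandFourierInv hG).intervalIntegrable _ _).def'
  calc
    ∫ t' in (-T)..T, (sincKernel W t t' : ℂ) • bandFourierInv W G t'
    _ = (2 * π : ℂ) • bandFourierInv W (fun ω => bandFourierInv T (bandFourierInv W G) (-ω)) t :=
      integral_sincKernel_smul W hg t
    _ = (2 * π : ℂ) • bandFourierInv W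
          (fun ω => bandFourierInv T (fun t' => bandFourierInv W G (-t')) ω) t := by
      simp only [bandFourierInv_comp_neg]
    _ = bandFourierInv W (fun ω => ∫ ω' in (-W)..W, (sincKernel T ω ω' : ℂ) • G ω') t := by
      simp only [integral_sincKernel_smul T hG, bandFourierInv_const_smul]

theorem one_dim_spectral_to_time_fredholm_general (T : ℝ) {W : ℝ} {lam : ℂ} {G : ℝ → E}
    (hG : IntegrableOn G (Set.uIoc (-W) W))
    (hFred : ∀ᵐ ω ∂volume.restrict (Set.uIoc (-W) W),
      ∫ ω' in (-W)..W, (sincKernel T ω ω' : ℂ) • G ω' = lam • G ω) (t : ℝ) :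
    ∫ t' in (-T)..T, (sincKernel W t t' : ℂ) • bandFourierInv W G t' =
      lam • bandFourierInv W G t := by
  rw [integral_sincKernel_smul_bandFourierInv T hG, bandFourierInv_congr_ae hFred,
    bandFourierInv_const_smul]

end SincOperator

theorem uIoc_ae_eq_Icc {α : Type*} [LinearOrder α] [MeasurableSpace α] {μ : Measure α}
    [NullSingletonClass μ] {a b : α} (hab : a ≤ b) : Set.uIoc a b =ᵐ[μ] Set.Icc a b := by
  rw [Set.uIoc_of_le hab]
  exact Ioc_ae_eq_Icc

/-- If `G`, integrable on `[−W,W]`, solves the spectral-domain concentration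
equation `∫_{−W}^W sin[T(ω−ω')]/(π(ω−ω')) G(ω') dω' = λ G(ω)` for a.e. `|ω| ≤ W`, then the
bandlimited function `g(t) = (2π)⁻¹ ∫_{−W}^W G(ω) e^{iωt} dω` solves the time-domain
equation `∫_{−T}^T sin[W(t−t')]/(π(t−t')) g(t') dt' = λ g(t)` for every `t ∈ ℝ`. -/
theorem one_dim_spectral_to_time_fredholm
    (T W lam : ℝ) (hT : 0 < T) (hW : 0 < W)
    (G : ℝ → ℂ)
    (hGint : IntegrableOn G (Set.Icc (-W) W))
    (hFred : ∀ᵐ ω ∂(volume.restrict (Set.Icc (-W) W)),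
      ∫ ω' in (-W)..W, (sincKernel T ω ω' : ℂ) * G ω' = (lam : ℂ) * G ω)
    (g : ℝ → ℂ)
    (hg : ∀ t : ℝ, g t = ((2 * π : ℝ))⁻¹ •
      ∫ ω in (-W)..W, G ω * Complex.exp (Complex.I * ω * t)) :
    ∀ t : ℝ, ∫ t' in (-T)..T, (sincKernel W t t' : ℂ) * g t' = (lam : ℂ) * g t := by
  have hband : Set.uIoc (-W) W =ᵐ[volume] Set.Icc (-W) W := uIoc_ae_eq_Icc (neg_le_self hW.le)
  obtain rfl : g = bandFourierInv W G :=
    funext fun t => (hg t).trans (bandFourierInv_eq_mul W G t).symm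
  exact one_dim_spectral_to_time_fredholm_general T (hGint.congr_set_ae hband)
    (Measure.restrict_congr_set hband ▸ hFred)
end
end
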